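/- Let p be an odd prime and let P be a finite p-group. Then there exists a characteristic subgroup D of P of exponent p such that [D, P] ≤ Z(D) and such that every non-trivial automorphism of P of order coprime to p restricts to a non-trivial automorphism of D. -/

import Mathlib

/-!
Thompson's argument, for a nilpotent group `G` in which the order of every element divides a power
of the odd number `n`. Let `C` be maximal among the characteristic subgroups with `[C, G] ≤ Z(C)`.
If the centralizer of `C` were not contained in `C`, then, `G` being nilpotent, it would contain an
element outside `C` that is central modulo `C`, and adjoining all such elements to `C` would
contradict maximality. So `C` contains its own centralizer, and an automorphism `φ` of order coprime
to `n` fixing `C` pointwise is trivial, because `x⁻¹ φ(x)` centralizes `C` for every `x`. As `C` has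
class at most two and `n` is odd, `(x y) ^ n = x ^ n * y ^ n` whenever `x, y ∈ C` and `y ^ n`
commutes with `x`. Hence the elements `x ∈ C` with `x ^ n = 1` form a subgroup `D`, and an
automorphism `φ` as above that fixes `D` pointwise fixes `C` pointwise: inductively it fixes
`x ^ n`, so `x⁻¹ φ(x) ∈ D`.
-/

open Subgroup
open scoped commutatorElement

section CommutatorPowers

variable {G : Type*} [Group G] {x y : G}

theorem commutatorElement_pow_left (hy : Commute ⁅y, x⁆ y) (n : ℕ) : ⁅y ^ n, x⁆ = ⁅y, x⁆ ^ n := by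
  induction n with
  | zero => simp
  | succ n ih =>
    rw [pow_succ', commutatorElement_mul_left_eq_conj_mul, ih, ← (hy.pow_left n).eq,
      mul_inv_cancel_right, pow_succ]

theorem mul_pow_eq_mul_commutatorElement_pow (hx : Commute ⁅y, x⁆ x) (hy : Commute ⁅y, x⁆ y)
    (n : ℕ) : (x * y) ^ n = x ^ n * y ^ n * ⁅y, x⁆ ^ n.choose 2 := by
  have pow_mul_eq (n : ℕ) : y ^ n * x = x * y ^ n * ⁅y, x⁆ ^ n := by
    rw [← ((hx.mul_right (hy.pow_right n)).pow_left n).eq, ← commutatorElement_pow_left hy,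
      commutatorElement_def]
    group
  induction n with
  | zero => simp
  | succ n ih =>
    calc (x * y) ^ (n + 1) = x ^ n * y ^ n * (⁅y, x⁆ ^ n.choose 2 * (x * y)) := by
          rw [pow_succ, ih, mul_assoc]
      _ = x ^ n * (y ^ n * x) * y * ⁅y, x⁆ ^ n.choose 2 := by
          rw [((hx.mul_right hy).pow_left _).eq]; simp only [mul_assoc]
      _ = x ^ n * x * y ^ n * (⁅y, x⁆ ^ n * y) * ⁅y, x⁆ ^ n.choose 2 := by
          rw [pow_mul_eq]; simp only [mul_assoc]
      _ = x ^ (n + 1) * y ^ (n + 1) * ⁅y, x⁆ ^ (n + 1).choose 2 := by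
          rw [(hy.pow_left n).eq, Nat.choose_succ_succ' n 1, Nat.choose_one_right, pow_add ⁅y, x⁆,
            pow_succ x n, pow_succ y n]
          simp only [mul_assoc]

theorem dvd_choose_two_of_odd {n : ℕ} (hn : Odd n) : n ∣ n.choose 2 := by
  obtain ⟨m, rfl⟩ := hn
  refine ⟨m, ?_⟩
  rw [Nat.choose_two_right, Nat.add_sub_cancel, mul_left_comm, Nat.mul_div_cancel_left _ two_pos]

theorem mul_pow_of_odd_of_commute_pow {n : ℕ} (hn : Odd n) (hx : Commute ⁅y, x⁆ x)
    (hy : Commute ⁅y, x⁆ y) (hyx : Commute (y ^ n) x) : (x * y) ^ n = x ^ n * y ^ n := by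
  have hc : ⁅y, x⁆ ^ n = 1 := by
    rw [← commutatorElement_pow_left hy, hyx.commutator_eq]
  obtain ⟨m, hm⟩ := dvd_choose_two_of_odd hn
  rw [mul_pow_eq_mul_commutatorElement_pow hx hy, hm, pow_mul, hc, one_pow, mul_one]

end CommutatorPowers

section ThompsonSubgroup

variable {G : Type*} [Group G] {C K : Subgroup G}

theorem commutator_top_right_le_iff_le_upperCentralSeriesStep [C.Normal] :
    ⁅K, (⊤ : Subgroup G)⁆ ≤ C ↔ K ≤ C.upperCentralSeriesStep :=
  commutator_le.trans ⟨fun h x hx y => h x hx y (mem_top y), fun h _ hx y _ => h hx y⟩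

theorem le_of_inf_upperCentralSeriesStep_le [Group.IsNilpotent G] [C.Normal] [K.Normal]
    (h : K ⊓ C.upperCentralSeriesStep ≤ C) : K ≤ C := by
  have inf_upperCentralSeries_le (n : ℕ) : K ⊓ Subgroup.upperCentralSeries G n ≤ C := by
    induction n with
    | zero => simp [Subgroup.upperCentralSeries_zero]
    | succ n ih =>
      refine (le_inf inf_le_left ?_).trans h
      rw [← commutator_top_right_le_iff_le_upperCentralSeriesStep]
      refine le_trans (le_inf ?_ ?_) ih
      · exact (commutator_mono inf_le_left le_rfl).trans (commutator_le_left K ⊤)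
      · exact (commutator_mono inf_le_right le_rfl).trans (commutator_upperCentralSeries_top_le G n)
  obtain ⟨n, hn⟩ := Group.IsNilpotent.nilpotent G
  simpa only [hn, inf_top_eq] using inf_upperCentralSeries_le n

theorem commutator_sup_top_le_centralizer {E : Subgroup G} [C.Normal] [E.Normal]
    (hC : ⁅C, (⊤ : Subgroup G)⁆ ≤ centralizer (C : Set G)) (hE : E ≤ centralizer (C : Set G))
    (hEC : ⁅E, (⊤ : Subgroup G)⁆ ≤ C) :
    ⁅C ⊔ E, (⊤ : Subgroup G)⁆ ≤ centralizer ((C ⊔ E : Subgroup G) : Set G) := by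
  have commutator_le_centralizer_sup {H : Subgroup G} (hHC : ⁅H, (⊤ : Subgroup G)⁆ ≤ C)
      (hH : ⁅H, (⊤ : Subgroup G)⁆ ≤ centralizer (C : Set G)) :
      ⁅H, (⊤ : Subgroup G)⁆ ≤ centralizer ((C ⊔ E : Subgroup G) : Set G) :=
    le_centralizer_iff.2 (sup_le (le_centralizer_iff.1 hH) (hE.trans (centralizer_le hHC)))
  rw [commutator_top_right_le_iff_le_upperCentralSeriesStep, sup_le_iff,
    ← commutator_top_right_le_iff_le_upperCentralSeriesStep,
    ← commutator_top_right_le_iff_le_upperCentralSeriesStep]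
  exact ⟨commutator_le_centralizer_sup (commutator_le_left C ⊤) hC,
    commutator_le_centralizer_sup hEC ((commutator_le_left E ⊤).trans hE)⟩

theorem commutator_sSup_top_le_centralizer {S : Set (Subgroup G)} (hS : IsChain (· ≤ ·) S)
    [(sSup S).Normal]
    (hcomm : ∀ H ∈ S, ⁅H, (⊤ : Subgroup G)⁆ ≤ centralizer (H : Set G)) :
    ⁅sSup S, (⊤ : Subgroup G)⁆ ≤ centralizer ((sSup S : Subgroup G) : Set G) := by
  rw [commutator_top_right_le_iff_le_upperCentralSeriesStep]
  refine sSup_le fun H hH => ?_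
  rw [← commutator_top_right_le_iff_le_upperCentralSeriesStep, le_centralizer_iff]
  refine sSup_le fun K hK => ?_
  rw [le_centralizer_iff]
  rcases hS.total hH hK with hHK | hKH
  · exact (commutator_mono hHK le_rfl).trans (hcomm K hK)
  · exact (hcomm H hH).trans (centralizer_le hKH)

variable (G) in
theorem exists_maximal_characteristic_commutator_le_centralizer :
    ∃ C : Subgroup G, Maximal (fun H : Subgroup G =>
      H.Characteristic ∧ ⁅H, (⊤ : Subgroup G)⁆ ≤ centralizer (H : Set G)) C := by
  refine zorn_le₀ {H : Subgroup G | H.Characteristic ∧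
    ⁅H, (⊤ : Subgroup G)⁆ ≤ centralizer (H : Set G)} fun S hS hchain => ?_
  have hchar : (sSup S).Characteristic := characteristic_sSup fun H hH => (hS hH).1
  exact ⟨sSup S,
    ⟨hchar, commutator_sSup_top_le_centralizer hchain fun H hH => (hS hH).2⟩,
    fun _ => le_sSup⟩

variable (G) in
theorem exists_characteristic_centralizer_le [Group.IsNilpotent G] :
    ∃ C : Subgroup G, C.Characteristic ∧ ⁅C, (⊤ : Subgroup G)⁆ ≤ centralizer (C : Set G) ∧
      centralizer (C : Set G) ≤ C := by
  obtain ⟨C, ⟨hchar, hcomm⟩, hmax⟩ := exists_maximal_characteristic_commutator_le_centralizer G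
  refine ⟨C, hchar, hcomm, le_of_inf_upperCentralSeriesStep_le ?_⟩
  have hadjoin := commutator_sup_top_le_centralizer hcomm inf_le_left
    (commutator_top_right_le_iff_le_upperCentralSeriesStep.2
      (inf_le_right : centralizer (C : Set G) ⊓ C.upperCentralSeriesStep ≤ _))
  exact le_sup_right.trans (hmax ⟨inferInstance, hadjoin⟩ le_sup_left)

end ThompsonSubgroup

section CoprimeAutomorphism

theorem mulAut_pow_apply_of_apply_eq_mul {M : Type*} [Monoid M] {φ : MulAut M} {x z : M}
    (hx : φ x = x * z) (hz : φ z = z) (n : ℕ) : (φ ^ n) x = x * z ^ n := by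
  induction n with
  | zero => simp
  | succ n ih =>
    rw [pow_succ', MulAut.mul_apply, ih, map_mul, map_pow, hx, hz, mul_assoc, pow_succ']

variable {G : Type*} [Group G] {φ : MulAut G}

theorem apply_eq_self_of_apply_inv_mul {x : G}
    (hφ : (orderOf (x⁻¹ * φ x)).Coprime (orderOf φ)) (hx : φ (x⁻¹ * φ x) = x⁻¹ * φ x) :
    φ x = x := by
  have hpow : (x⁻¹ * φ x) ^ orderOf φ = 1 := by
    have h := mulAut_pow_apply_of_apply_eq_mul (mul_inv_cancel_left x (φ x)).symm hx (orderOf φ)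
    rwa [pow_orderOf_eq_one, MulAut.one_apply, left_eq_mul] at h
  have horder : orderOf (x⁻¹ * φ x) = 1 := hφ.eq_one_of_dvd (orderOf_dvd_of_pow_eq_one hpow)
  exact (inv_mul_eq_one.1 (orderOf_eq_one_iff.1 horder)).symm

theorem inv_mul_apply_mem_centralizer {C : Subgroup G} [C.Normal] (hfix : ∀ c ∈ C, φ c = c)
    (x : G) : x⁻¹ * φ x ∈ centralizer (C : Set G) := by
  refine mem_centralizer_iff.2 fun c hc => ?_
  have hconj : φ x * c * (φ x)⁻¹ = x * c * x⁻¹ := by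
    have h := hfix _ (Normal.conj_mem ‹C.Normal› c hc x)
    rwa [map_mul, map_mul, map_inv, hfix c hc] at h
  calc c * (x⁻¹ * φ x) = x⁻¹ * (x * c * x⁻¹) * φ x := by group
    _ = x⁻¹ * φ x * c := by rw [← hconj]; group

theorem mulAut_eq_one_of_centralizer_le {C : Subgroup G} [C.Normal]
    (hC : centralizer (C : Set G) ≤ C) (hφ : ∀ x : G, (orderOf x).Coprime (orderOf φ))
    (hfix : ∀ c ∈ C, φ c = c) : φ = 1 :=
  MulEquiv.ext fun x =>
    apply_eq_self_of_apply_inv_mul (hφ _) (hfix _ (hC (inv_mul_apply_mem_centralizer hfix x)))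

end CoprimeAutomorphism

section Omega

variable {G : Type*} [Group G] {C : Subgroup G} {n : ℕ} {x y : G}

/-- The subgroup `Ω(C)` generated by the elements `x` of `C` with `x ^ n = 1`; for a prime `n = p`
this is the subgroup `Ω₁(C)` of a `p`-group `C`. -/
def omegaSubgroup (C : Subgroup G) (n : ℕ) : Subgroup G :=
  closure {x | x ∈ C ∧ x ^ n = 1}

theorem mem_omegaSubgroup_of_pow_eq_one (hx : x ∈ C) (hxn : x ^ n = 1) :
    x ∈ omegaSubgroup C n :=
  subset_closure ⟨hx, hxn⟩

theorem omegaSubgroup_le (C : Subgroup G) (n : ℕ) : omegaSubgroup C n ≤ C :=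
  (closure_le C).2 fun _ hx => hx.1

instance omegaSubgroup_characteristic (C : Subgroup G) [hC : C.Characteristic] (n : ℕ) :
    (omegaSubgroup C n).Characteristic := by
  refine characteristic_iff_le_comap.2 fun φ => (closure_le _).2 fun x ⟨hx, hxn⟩ => ?_
  refine mem_omegaSubgroup_of_pow_eq_one (characteristic_iff_le_comap.1 hC φ hx) ?_
  rw [← map_pow, hxn, map_one]

theorem mul_pow_of_mem_of_commute_pow (hn : Odd n) (hC : ⁅C, C⁆ ≤ centralizer (C : Set G))
    (hx : x ∈ C) (hy : y ∈ C) (hyx : Commute (y ^ n) x) : (x * y) ^ n = x ^ n * y ^ n := by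
  have hcomm : ∀ c ∈ C, Commute ⁅y, x⁆ c := fun c hc =>
    (mem_centralizer_iff.1 (hC (commutator_mem_commutator hy hx)) c hc).symm
  exact mul_pow_of_odd_of_commute_pow hn (hcomm x hx) (hcomm y hy) hyx

theorem pow_eq_one_of_mem_omegaSubgroup (hn : Odd n) (hC : ⁅C, C⁆ ≤ centralizer (C : Set G))
    (hx : x ∈ omegaSubgroup C n) : x ^ n = 1 := by
  induction hx using closure_induction with
  | mem x hx => exact hx.2
  | one => exact one_pow n
  | mul x y hx hy hxn hyn =>
    rw [mul_pow_of_mem_of_commute_pow hn hC (omegaSubgroup_le C n hx) (omegaSubgroup_le C n hy)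
      (hyn ▸ Commute.one_left x), hxn, hyn, one_mul]
  | inv x _ hxn => rw [inv_pow, hxn, inv_one]

theorem apply_eq_self_of_forall_pow_eq_one (hn : Odd n) (hC : ⁅C, C⁆ ≤ centralizer (C : Set G))
    {φ : MulAut G} (hφ : ∀ c ∈ C, (orderOf c).Coprime (orderOf φ)) (hφC : ∀ c ∈ C, φ c ∈ C)
    (hfix : ∀ c ∈ C, c ^ n = 1 → φ c = c) {k : ℕ} (hx : x ∈ C) (hxk : x ^ n ^ k = 1) :
    φ x = x := by
  induction k generalizing x with
  | zero => rw [← pow_one x, ← pow_zero n, hxk, map_one]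
  | succ k ih =>
    have hpow : φ x ^ n = x ^ n := by
      rw [← map_pow]
      exact ih (pow_mem hx n) (by rw [← pow_mul, ← pow_succ', hxk])
    have hcomm : Commute (φ x ^ n) x⁻¹ := by
      rw [hpow]
      exact (Commute.pow_self x n).inv_right
    have hmem : x⁻¹ * φ x ∈ C := mul_mem (inv_mem hx) (hφC x hx)
    have hone : (x⁻¹ * φ x) ^ n = 1 := by
      rw [mul_pow_of_mem_of_commute_pow hn hC (inv_mem hx) (hφC x hx) hcomm, hpow, inv_pow,
        inv_mul_cancel]
    exact apply_eq_self_of_apply_inv_mul (hφ _ hmem) (hfix _ hmem hone)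

end Omega

theorem exists_special_characteristic_subgroup_general {n : ℕ} (hn : Odd n)
    {G : Type*} [Group G] [Group.IsNilpotent G] (hG : IsPGroup n G) :
    ∃ D : Subgroup G, D.Characteristic ∧ (∀ x ∈ D, x ^ n = 1) ∧
      ⁅D, (⊤ : Subgroup G)⁆ ≤ D ⊓ centralizer (D : Set G) ∧
      ∀ φ : MulAut G, φ ≠ 1 → Nat.Coprime (orderOf φ) n → ∃ x ∈ D, φ x ≠ x := by
  obtain ⟨C, hchar, hcomm, hcent⟩ := exists_characteristic_centralizer_le G
  have hclass : ⁅C, C⁆ ≤ centralizer (C : Set G) := (commutator_mono le_rfl le_top).trans hcomm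
  have hDC := omegaSubgroup_le C n
  refine ⟨omegaSubgroup C n, inferInstance, fun x => pow_eq_one_of_mem_omegaSubgroup hn hclass,
    le_inf (commutator_le_left _ ⊤) ?_, fun φ hφ hcop => ?_⟩
  · exact (commutator_mono hDC le_rfl).trans (hcomm.trans (centralizer_le hDC))
  · have horder := hG.orderOf_coprime hcop.symm
    by_contra! hfix
    refine hφ (mulAut_eq_one_of_centralizer_le hcent horder fun c hc => ?_)
    obtain ⟨k, hk⟩ := hG c
    exact apply_eq_self_of_forall_pow_eq_one hn hclass (fun x _ => horder x)
      (fun _ hx => characteristic_iff_le_comap.1 hchar φ hx)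
      (fun _ hx hxn => hfix _ (mem_omegaSubgroup_of_pow_eq_one hx hxn)) hc hk

/-- Let `p` be an odd prime and `P` a finite `p`-group.  There is a
characteristic subgroup `D` of `P` of exponent `p` with `[D, P] ≤ Z(D)` such
that every non-trivial automorphism of `P` of order coprime to `p` restricts to
a non-trivial automorphism of `D` (i.e. moves some element of `D`). -/
theorem exists_special_characteristic_subgroup {p : ℕ} (hp : p.Prime) (hodd : Odd p)
    {P : Type*} [Group P] [Finite P] (hP : IsPGroup p P) :
    ∃ D : Subgroup P, D.Characteristic ∧ (∀ x ∈ D, x ^ p = 1) ∧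
      ⁅D, (⊤ : Subgroup P)⁆ ≤ D ⊓ Subgroup.centralizer (D : Set P) ∧
      ∀ φ : MulAut P, φ ≠ 1 → Nat.Coprime (orderOf φ) p → ∃ x ∈ D, φ x ≠ x := by
  have : Fact p.Prime := ⟨hp⟩
  have : Group.IsNilpotent P := hP.isNilpotent
  exact exists_special_characteristic_subgroup_general hodd hP
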